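/- arXiv:math/0505153 — 2 statements merged into one kernel-verified Lean document; each statement's English description precedes it below -/
import Mathlib

section
/- For μ, m ∈ ℝ, σ > 0 and i ∈ ℕ, let ν^i_{(μ,m,σ²)} be the probability measure on ℝ with density x ↦ (x+μ)^{2i}/C_{2i}(m+μ; σ²) with respect to the Gaussian measure N(m, σ²), where C_{2i}(c; σ²) = E((σZ + c)^{2i}) for Z standard Gaussian. Then for every fixed i ∈ ℕ and μ, m ∈ ℝ, the measures ν^i_{(μ,m,σ²)} converge weakly to the Dirac measure δ_m as σ → 0⁺. -/
open MeasureTheory ProbabilityTheory Filter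

/-- `C_{2i}(c; σ²) = E((σZ + c)^{2i})` for `Z` standard Gaussian. -/
noncomputable def gaussShiftedMoment (i : ℕ) (c σ : ℝ) : ℝ :=
  ∫ z, (σ * z + c) ^ (2 * i) ∂(gaussianReal 0 1)

/-- The probability measure `ν^i_{(μ,m,σ²)}` with density
`x ↦ (x+μ)^{2i}/C_{2i}(m+μ; σ²)` with respect to the Gaussian `N(m, σ²)`. -/
noncomputable def nuKalman (i : ℕ) (μ m σ : ℝ) : Measure ℝ :=
  (gaussianReal m (Real.toNNReal (σ ^ 2))).withDensity
    (fun x => ENNReal.ofReal ((x + μ) ^ (2 * i) / gaussShiftedMoment i (m + μ) σ))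

/-!
For even `n`, convexity gives `(x + c)ⁿ + (-x + c)ⁿ ≥ xⁿ + cⁿ`. Averaging this over a symmetric
law bounds `E(σZ + c)ⁿ` below by `(σⁿ E(Zⁿ) + cⁿ) / 2`, while `(σz + c)ⁿ ≤ 2ⁿ⁻¹ (σⁿzⁿ + cⁿ)`.
Hence the weights `(σz + c)ⁿ / E(σZ + c)ⁿ` are dominated by a constant multiple of
`zⁿ / E(Zⁿ) + 1`, uniformly in `σ`, even when `c = 0` and the normalizing constant tends to `0`.
Since `σz + m → m` for every `z`, dominated convergence concludes.
-/

open scoped Topology BoundedContinuousFunction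

lemma pow_add_pow_le_add_pow_add_neg_add_pow {R : Type*} [CommRing R] [LinearOrder R]
    [IsStrictOrderedRing R] {n : ℕ} (hn : Even n) (x y : R) :
    x ^ n + y ^ n ≤ (x + y) ^ n + (-x + y) ^ n := by
  have two_mul_pow_le (a b : R) : 2 * b ^ n ≤ (a + b) ^ n + (-a + b) ^ n := by
    rcases n.eq_zero_or_pos with rfl | hpos
    · norm_num
    have h : 2 ^ (n - 1) * (2 * b ^ n) ≤ 2 ^ (n - 1) * ((a + b) ^ n + (-a + b) ^ n) :=
      calc 2 ^ (n - 1) * (2 * b ^ n) = ((a + b) + (-a + b)) ^ n := by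
            rw [← mul_assoc, pow_sub_one_mul hpos.ne', ← mul_pow]; ring
        _ ≤ _ := hn.add_pow_le
    exact le_of_mul_le_mul_left h (by positivity)
  have hx := two_mul_pow_le y x
  have hy := two_mul_pow_le x y
  have hneg : (-y + x) ^ n = (-x + y) ^ n := by rw [← hn.neg_pow]; ring
  rw [hneg, add_comm y x] at hx
  linarith

section EvenMoments

variable {P : Measure ℝ} {n : ℕ}

lemma integrable_mul_add_pow [IsFiniteMeasure P] (hP : MemLp id n P) (a c : ℝ) :
    Integrable (fun z => (a * z + c) ^ n) P := by
  have h : MemLp (fun z => a * z + c) n P := (hP.const_mul a).add (memLp_const c)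
  exact h.integrable_norm_pow'.mono' (by fun_prop) (.of_forall fun z => (norm_pow _ _).le)

lemma integral_pow_pos_of_even [IsFiniteMeasure P] [NeZero P] [NullSingletonClass P]
    (hn : Even n) (hP : MemLp id n P) : 0 < ∫ z, z ^ n ∂P := by
  have hint : Integrable (fun z : ℝ => z ^ n) P := by simpa using integrable_mul_add_pow hP 1 0
  refine (integral_nonneg fun z => hn.pow_nonneg z).lt_of_ne' fun hzero => ?_
  have hpow : ∀ᵐ z ∂P, z ^ n = 0 :=
    (integral_eq_zero_iff_of_nonneg (fun z => hn.pow_nonneg z) hint).mp hzero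
  have hne : ∀ᵐ z ∂P, z ≠ 0 := Measure.ae_ne P 0
  obtain ⟨z, hz, hz0⟩ := (hpow.and hne).exists
  exact pow_ne_zero n hz0 hz

variable [IsProbabilityMeasure P] [P.IsNegInvariant]

lemma pow_mul_integral_pow_add_pow_le (hn : Even n) (hP : MemLp id n P) (a c : ℝ) :
    a ^ n * ∫ z, z ^ n ∂P + c ^ n ≤ 2 * ∫ z, (a * z + c) ^ n ∂P := by
  have hpow : Integrable (fun z : ℝ => a ^ n * z ^ n) P := by
    simpa [mul_pow] using integrable_mul_add_pow hP a 0
  have hsum : Integrable (fun z : ℝ => a ^ n * z ^ n + c ^ n) P := hpow.add (integrable_const _)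
  have hpos := integrable_mul_add_pow hP a c
  have hneg : Integrable (fun z => (-(a * z) + c) ^ n) P := by
    simpa using integrable_mul_add_pow hP (-a) c
  have hsymm : ∫ z, (-(a * z) + c) ^ n ∂P = ∫ z, (a * z + c) ^ n ∂P := by
    simpa using integral_neg_eq_self (fun z => (a * z + c) ^ n) P
  calc a ^ n * ∫ z, z ^ n ∂P + c ^ n = ∫ z, ((a * z) ^ n + c ^ n) ∂P := by
        simp only [mul_pow]
        rw [integral_add hpow (integrable_const _), integral_const_mul, integral_const,
          probReal_univ, one_smul]
    _ ≤ ∫ z, ((a * z + c) ^ n + (-(a * z) + c) ^ n) ∂P := by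
        simp only [← mul_pow] at hsum
        exact integral_mono hsum (hpos.add hneg) fun z =>
          pow_add_pow_le_add_pow_add_neg_add_pow hn (a * z) c
    _ = 2 * ∫ z, (a * z + c) ^ n ∂P := by
        rw [integral_add hpos hneg, hsymm, two_mul]

lemma integral_mul_add_pow_pos (hn : Even n) (hP : MemLp id n P) (hM : 0 < ∫ z, z ^ n ∂P)
    {a : ℝ} (ha : a ≠ 0) (c : ℝ) : 0 < ∫ z, (a * z + c) ^ n ∂P := by
  have hlower := pow_mul_integral_pow_add_pow_le hn hP a c
  have haM : 0 < a ^ n * ∫ z, z ^ n ∂P := mul_pos (hn.pow_pos ha) hM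
  linarith [hn.pow_nonneg c]

lemma mul_add_pow_div_integral_le (hn : Even n) (hP : MemLp id n P) (hM : 0 < ∫ z, z ^ n ∂P)
    (a c z : ℝ) :
    (a * z + c) ^ n / ∫ y, (a * y + c) ^ n ∂P ≤ 2 * 2 ^ (n - 1) * (z ^ n / ∫ y, y ^ n ∂P + 1) := by
  set M := ∫ y, y ^ n ∂P
  set C := ∫ y, (a * y + c) ^ n ∂P
  have ha := hn.pow_nonneg a
  have hc := hn.pow_nonneg c
  have hz : 0 ≤ z ^ n / M := div_nonneg (hn.pow_nonneg z) hM.le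
  have hC : a ^ n * M + c ^ n ≤ 2 * C := pow_mul_integral_pow_add_pow_le hn hP a c
  have hupper : (a * z) ^ n + c ^ n ≤ (z ^ n / M + 1) * (a ^ n * M + c ^ n) := by
    have hexpand : (z ^ n / M + 1) * (a ^ n * M + c ^ n) =
        (a * z) ^ n + c ^ n + (z ^ n / M * c ^ n + a ^ n * M) := by
      field_simp
      ring
    rw [hexpand]
    exact le_add_of_nonneg_right (by positivity)
  refine div_le_of_le_mul₀ (integral_nonneg fun y => hn.pow_nonneg _) (by positivity) ?_
  calc (a * z + c) ^ n ≤ 2 ^ (n - 1) * ((a * z) ^ n + c ^ n) := hn.add_pow_le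
    _ ≤ 2 ^ (n - 1) * ((z ^ n / M + 1) * (2 * C)) := by
        gcongr
        exact hupper.trans (by gcongr)
    _ = 2 * 2 ^ (n - 1) * (z ^ n / M + 1) * C := by ring

end EvenMoments

section DominatedWeights

variable {ι Ω E F : Type*} [MeasurableSpace Ω] [TopologicalSpace E] [NormedAddCommGroup F]
  [NormedSpace ℝ F] {P : Measure Ω}

lemma integrable_smul_boundedContinuousFunction_comp {g : Ω → ℝ} {X : Ω → E}
    (hg : Integrable g P) (hX : AEStronglyMeasurable X P) (f : E →ᵇ F) :
    Integrable (fun ω => g ω • f (X ω)) P :=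
  hg.smul_bdd ‖f‖ (f.continuous.comp_aestronglyMeasurable hX)
    (.of_forall fun ω => f.norm_coe_le_norm (X ω))

variable {l : Filter ι} [l.IsCountablyGenerated] {g : ι → Ω → ℝ} {X : ι → Ω → E}
  {bound : Ω → ℝ} {x : E}

lemma tendsto_integral_smul_comp_zero_of_dominated
    (hX_meas : ∀ᶠ i in l, AEStronglyMeasurable (X i) P) (hbound : Integrable bound P)
    (hg_le : ∀ᶠ i in l, ∀ᵐ ω ∂P, ‖g i ω‖ ≤ bound ω)
    (hX_lim : ∀ᵐ ω ∂P, Tendsto (fun i => X i ω) l (𝓝 x)) {f : E →ᵇ F} (hf : f x = 0) :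
    Tendsto (fun i => ∫ ω, g i ω • f (X i ω) ∂P) l (𝓝 0) := by
  have hint : ∀ᶠ i in l, Integrable (fun ω => ‖bound ω • f (X i ω)‖) P := by
    filter_upwards [hX_meas] with i hXi
    exact (integrable_smul_boundedContinuousFunction_comp hbound hXi f).norm
  have hlim : Tendsto (fun i => ∫ ω, ‖bound ω • f (X i ω)‖ ∂P) l (𝓝 0) := by
    rw [← integral_zero Ω ℝ (μ := P)]
    refine tendsto_integral_filter_of_dominated_convergence (fun ω => ‖bound ω‖ * ‖f‖)
      (hint.mono fun i hi => hi.aestronglyMeasurable)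
      (.of_forall fun i => .of_forall fun ω => ?_) (hbound.norm.mul_const _) ?_
    · rw [norm_norm, norm_smul]
      gcongr
      exact f.norm_coe_le_norm _
    · filter_upwards [hX_lim] with ω hω
      have hfX : Tendsto (fun i => f (X i ω)) l (𝓝 0) := hf ▸ (f.continuous.tendsto x).comp hω
      simpa using (hfX.const_smul (bound ω)).norm
  refine squeeze_zero_norm' ?_ hlim
  filter_upwards [hint, hg_le] with i hi hle
  refine norm_integral_le_of_norm_le hi ?_
  filter_upwards [hle] with ω hω
  rw [norm_smul, norm_smul]
  gcongr
  exact hω.trans (le_abs_self _)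

lemma tendsto_integral_smul_comp_of_dominated [CompleteSpace F] {r : ℝ}
    (hg_meas : ∀ᶠ i in l, AEStronglyMeasurable (g i) P)
    (hX_meas : ∀ᶠ i in l, AEStronglyMeasurable (X i) P) (hbound : Integrable bound P)
    (hg_le : ∀ᶠ i in l, ∀ᵐ ω ∂P, ‖g i ω‖ ≤ bound ω)
    (hg_lim : Tendsto (fun i => ∫ ω, g i ω ∂P) l (𝓝 r))
    (hX_lim : ∀ᵐ ω ∂P, Tendsto (fun i => X i ω) l (𝓝 x)) (f : E →ᵇ F) :
    Tendsto (fun i => ∫ ω, g i ω • f (X i ω) ∂P) l (𝓝 (r • f x)) := by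
  have hdev : Tendsto (fun i => ∫ ω, g i ω • (f (X i ω) - f x) ∂P) l (𝓝 0) :=
    tendsto_integral_smul_comp_zero_of_dominated hX_meas hbound hg_le hX_lim
      (f := f - .const E (f x)) (sub_self _)
  rw [← zero_add (r • f x)]
  refine (hdev.add (hg_lim.smul_const (f x))).congr' ?_
  filter_upwards [hg_meas, hX_meas, hg_le] with i hgi hXi hle
  have hg_int : Integrable (g i) P := hbound.mono' hgi hle
  simp only [smul_sub]
  rw [integral_sub (integrable_smul_boundedContinuousFunction_comp hg_int hXi f)
    (hg_int.smul_const _), integral_smul_const, sub_add_cancel]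

end DominatedWeights

lemma tendsto_integral_mul_add_pow_div_smul {F : Type*} [NormedAddCommGroup F] [NormedSpace ℝ F]
    [CompleteSpace F] {P : Measure ℝ} [IsProbabilityMeasure P] [P.IsNegInvariant] {n : ℕ}
    (hn : Even n) (hP : MemLp id n P) (hM : 0 < ∫ z, z ^ n ∂P) (c m : ℝ) (f : ℝ →ᵇ F) :
    Tendsto (fun a => ∫ z, ((a * z + c) ^ n / ∫ y, (a * y + c) ^ n ∂P) • f (a * z + m) ∂P)
      (𝓝[≠] 0) (𝓝 (f m)) := by
  have hpow : Integrable (fun z : ℝ => z ^ n) P := by simpa using integrable_mul_add_pow hP 1 0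
  have hbound : Integrable (fun z => 2 * 2 ^ (n - 1) * (z ^ n / ∫ y, y ^ n ∂P + 1)) P :=
    ((hpow.div_const _).add (integrable_const 1)).const_mul _
  have hdominated (a z : ℝ) : ‖(a * z + c) ^ n / ∫ y, (a * y + c) ^ n ∂P‖ ≤
      2 * 2 ^ (n - 1) * (z ^ n / ∫ y, y ^ n ∂P + 1) := by
    rw [Real.norm_of_nonneg
      (div_nonneg (hn.pow_nonneg _) (integral_nonneg fun y => hn.pow_nonneg _))]
    exact mul_add_pow_div_integral_le hn hP hM a c z
  have hnormalized : ∀ᶠ a in 𝓝[≠] (0 : ℝ),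
      1 = ∫ z, (a * z + c) ^ n / ∫ y, (a * y + c) ^ n ∂P ∂P := by
    filter_upwards [self_mem_nhdsWithin] with a ha
    rw [integral_div, div_self (integral_mul_add_pow_pos hn hP hM ha c).ne']
  have hconcentrated (z : ℝ) : Tendsto (fun a => a * z + m) (𝓝[≠] 0) (𝓝 m) := by
    have hcont : Continuous fun a : ℝ => a * z + m := by fun_prop
    simpa using (hcont.tendsto 0).mono_left nhdsWithin_le_nhds
  simpa only [one_smul] using tendsto_integral_smul_comp_of_dominated
    (.of_forall fun a => by fun_prop) (.of_forall fun a => by fun_prop) hbound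
    (.of_forall fun a => .of_forall (hdominated a)) (tendsto_const_nhds.congr' hnormalized)
    (.of_forall hconcentrated) f

section Gaussian

instance isNegInvariant_gaussianReal_zero (v : NNReal) : (gaussianReal 0 v).IsNegInvariant :=
  ⟨by simpa [Measure.neg] using gaussianReal_map_neg (μ := 0) (v := v)⟩

lemma gaussianReal_map_const_mul_add_const (μ : ℝ) (v : NNReal) (c y : ℝ) :
    (gaussianReal μ v).map (fun x => c * x + y) =
      gaussianReal (c * μ + y) ((c ^ 2).toNNReal * v) := by
  have hcomp : (fun x : ℝ => c * x + y) = (· + y) ∘ (c * ·) := rfl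
  rw [hcomp, ← Measure.map_map (by fun_prop) (by fun_prop), gaussianReal_map_const_mul,
    gaussianReal_map_add_const, Real.toNNReal_of_nonneg (sq_nonneg c)]

lemma integral_pow_gaussianReal_pos {n : ℕ} (hn : Even n) (μ : ℝ) {v : NNReal} (hv : v ≠ 0) :
    0 < ∫ z, z ^ n ∂gaussianReal μ v :=
  have := nullSingletonClass_gaussianReal (μ := μ) hv
  integral_pow_pos_of_even hn (memLp_id_gaussianReal n)

variable {F : Type*} [NormedAddCommGroup F] [NormedSpace ℝ F]

lemma integral_nuKalman (i : ℕ) (μ m σ : ℝ) {f : ℝ → F} (hf : StronglyMeasurable f) :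
    ∫ x, f x ∂nuKalman i μ m σ =
      ∫ z, ((σ * z + (m + μ)) ^ (2 * i) / gaussShiftedMoment i (m + μ) σ) • f (σ * z + m)
        ∂gaussianReal 0 1 := by
  have hmap : gaussianReal m (σ ^ 2).toNNReal = (gaussianReal 0 1).map (fun z => σ * z + m) := by
    simp [gaussianReal_map_const_mul_add_const]
  have hpow (x : ℝ) : 0 ≤ x ^ (2 * i) := (even_two_mul i).pow_nonneg x
  have hC : 0 ≤ gaussShiftedMoment i (m + μ) σ := integral_nonneg fun z => hpow _
  rw [nuKalman, integral_withDensity_eq_integral_toReal_smul (by fun_prop)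
    (.of_forall fun _ => ENNReal.ofReal_lt_top)]
  simp only [ENNReal.toReal_ofReal (div_nonneg (hpow _) hC)]
  rw [hmap, integral_map (by fun_prop) (by fun_prop)]
  simp only [add_assoc]

theorem nuKalman_tendsto_dirac_general [CompleteSpace F] (i : ℕ) (μ m : ℝ) (f : ℝ →ᵇ F) :
    Tendsto (fun σ => ∫ x, f x ∂nuKalman i μ m σ) (𝓝[≠] 0) (𝓝 (f m)) := by
  have hn : Even (2 * i) := even_two_mul i
  simp_rw [integral_nuKalman i μ m _ f.continuous.stronglyMeasurable]
  exact tendsto_integral_mul_add_pow_div_smul hn (memLp_id_gaussianReal (2 * i : ℕ))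
    (integral_pow_gaussianReal_pos hn 0 one_ne_zero) (m + μ) m f

end Gaussian

/-- As `σ → 0⁺`, the measures `ν^i_{(μ,m,σ²)}` converge weakly to the Dirac
measure `δ_m`: integrals of every bounded continuous function converge. -/
theorem nuKalman_tendsto_dirac (i : ℕ) (μ m : ℝ) :
    ∀ f : BoundedContinuousFunction ℝ ℝ,
      Tendsto (fun σ => ∫ x, f x ∂(nuKalman i μ m σ))
        (nhdsWithin 0 (Set.Ioi 0)) (nhds (f m)) := by
  intro f
  exact (nuKalman_tendsto_dirac_general i μ m f).mono_left (nhdsGT_le_nhdsNE 0)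
end

section
/- Let a ∈ ℝ with a ≠ 0, β > 0, μ, m ∈ ℝ, σ > 0 and i ∈ ℕ. Let X have law ν^i_{(μ,m,σ²)} (density x ↦ (x+μ)^{2i}/C_{2i}(m+μ; σ²) with respect to N(m, σ²)) and let η be a standard Gaussian variable independent of X. Then the law of aX + βη equals the finite mixture Σ_{k=0}^{i} ᾱ_k^{(i)} ν^k_{(μ̄, m̄, σ̄²)}, where m̄ = a m, σ̄² = β² + a²σ², μ̄ = (mβ² + μσ̄²)/(aσ²), and for k = 0, …, i: ᾱ_k^{(i)} = binom(i,k) (β^{2(i−k)}/B_i) Σ_{j=0}^{k} binom(k,j) ((μ+m)^{2j}/(C_{2j} σ^{2j})) (a^{2(k−j)} σ^{2(k−j)} / σ̄^{2(i−j)}), with B_i = Σ_{k=0}^{i} binom(i,k) (μ+m)^{2k}/(C_{2k} σ^{2k}). In particular the ᾱ_k^{(i)} are nonnegative and Σ_{k=0}^{i} ᾱ_k^{(i)} = 1. -/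
open MeasureTheory ProbabilityTheory

/-- The even Gaussian moments `C_{2j} = (2j)!/(2ʲ j!)`. -/
noncomputable def gaussEvenMoment (j : ℕ) : ℝ :=
  (Nat.factorial (2 * j)) / (2 ^ j * Nat.factorial j)

/-- Normalizing constant `B_i = ∑_{k=0}^i binom(i,k) (μ+m)^{2k}/(C_{2k} σ^{2k})`. -/
noncomputable def kalmanB (i : ℕ) (μ m σ : ℝ) : ℝ :=
  ∑ k ∈ Finset.range (i + 1),
    (Nat.choose i k : ℝ) * (μ + m) ^ (2 * k) / (gaussEvenMoment k * σ ^ (2 * k))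

/-- The mixture coefficients `ᾱ_k^{(i)}` of the prediction step, where
`σ̄² = β² + a²σ²`. -/
noncomputable def kalmanPredCoeff (i k : ℕ) (a β μ m σ : ℝ) : ℝ :=
  (Nat.choose i k : ℝ) * (β ^ (2 * (i - k)) / kalmanB i μ m σ)
    * ∑ j ∈ Finset.range (k + 1),
        (Nat.choose k j : ℝ) * ((μ + m) ^ (2 * j) / (gaussEvenMoment j * σ ^ (2 * j)))
          * (a ^ (2 * (k - j)) * σ ^ (2 * (k - j)) / (β ^ 2 + a ^ 2 * σ ^ 2) ^ (i - j))

open scoped NNReal ENNReal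

/-!
Standardize `X` and `η` to independent standard Gaussians `Z`, `W` and write `τ² = β² + a²σ²`. Under
the Gaussian law, rotating `(Z, W)` onto the direction of `a X + β η` splits
`X = m + (aσ²/τ²)(Y - am) - (σβ/τ) W'` with `Y ∼ N(am, τ²)` and `W'` an independent standard
Gaussian. Hence tilting the law of `X` by `(x + μ)^{2i}` tilts the law of `Y` by the conditional
expectation of `(X + μ)^{2i}` given `Y`, which is a shifted Gaussian moment whose shift is
`(aσ²/τ²)(Y + μ̄)`. As the odd Gaussian moments vanish, that moment is a combination of the even
powers `(Y + μ̄)^{2k}`, and each of these is a multiple of the density of `ν^k`.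
-/

lemma integrable_pow_gaussianReal (n : ℕ) (m : ℝ) (v : ℝ≥0) :
    Integrable (fun x : ℝ ↦ x ^ n) (gaussianReal m v) := by
  have h := (memLp_id_gaussianReal (μ := m) (v := v) (n : ℝ≥0)).integrable_norm_pow'
  rw [← integrable_norm_iff (by fun_prop)]
  simpa only [norm_pow, id_eq] using h

lemma hasDerivAt_gaussianPDFReal (m : ℝ) (v : ℝ≥0) (x : ℝ) :
    HasDerivAt (gaussianPDFReal m v) (-((x - m) / v * gaussianPDFReal m v x)) x := by
  have hexponent : HasDerivAt (fun y : ℝ ↦ -(y - m) ^ 2 / (2 * v)) (-((x - m) / v)) x := by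
    refine ((((hasDerivAt_id' x).sub_const m).fun_pow 2).fun_neg.div_const _).congr_deriv ?_
    norm_num
    ring
  refine (hexponent.exp.const_mul (√(2 * Real.pi * v))⁻¹).congr_deriv ?_
  rw [gaussianPDFReal]
  ring

lemma integrable_gaussianReal_iff_integrable_mul {m : ℝ} {v : ℝ≥0} (hv : v ≠ 0) {f : ℝ → ℝ} :
    Integrable f (gaussianReal m v) ↔ Integrable fun x ↦ f x * gaussianPDFReal m v x := by
  rw [gaussianReal_of_var_ne_zero _ hv, integrable_withDensity_iff (measurable_gaussianPDF m v)
    (ae_of_all _ fun _ ↦ gaussianPDF_lt_top)]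
  simp only [toReal_gaussianPDF]

/-- Stein's identity. -/
lemma integral_sub_mul_gaussianReal {m : ℝ} {v : ℝ≥0} {u u' : ℝ → ℝ}
    (hderiv : ∀ x, HasDerivAt u (u' x) x) (hu : Integrable u (gaussianReal m v))
    (hu' : Integrable u' (gaussianReal m v))
    (hmul : Integrable (fun x ↦ (x - m) * u x) (gaussianReal m v)) :
    ∫ x, (x - m) * u x ∂gaussianReal m v = v * ∫ x, u' x ∂gaussianReal m v := by
  obtain rfl | hv := eq_or_ne v 0
  · simp
  have hv' : (v : ℝ) ≠ 0 := by exact_mod_cast hv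
  rw [integrable_gaussianReal_iff_integrable_mul hv] at hu hu' hmul
  have hparts := integral_mul_deriv_eq_deriv_mul_of_integrable
    (fun x _ ↦ hderiv x) (fun x _ ↦ hasDerivAt_gaussianPDFReal m v x)
    ((hmul.const_mul (-(v : ℝ)⁻¹)).congr (ae_of_all _ fun x ↦ by
      simp only [Pi.mul_apply]; ring)) hu' hu
  have hcongr (x : ℝ) : u x * -((x - m) / v * gaussianPDFReal m v x)
      = -(v : ℝ)⁻¹ * (gaussianPDFReal m v x * ((x - m) * u x)) := by ring
  simp_rw [hcongr, integral_const_mul, mul_comm (u' _)] at hparts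
  simp_rw [integral_gaussianReal_eq_integral_smul hv, smul_eq_mul]
  rwa [neg_mul, neg_inj, inv_mul_eq_iff_eq_mul₀ hv'] at hparts

lemma integral_pow_add_two_gaussianReal (n : ℕ) (v : ℝ≥0) :
    ∫ x, x ^ (n + 2) ∂gaussianReal 0 v = v * ((n + 1) * ∫ x, x ^ n ∂gaussianReal 0 v) := by
  have hsub (x : ℝ) : (x - 0) * x ^ (n + 1) = x ^ (n + 2) := by ring
  have hstein := integral_sub_mul_gaussianReal (m := 0) (v := v)
    (fun x ↦ hasDerivAt_pow (n + 1) x) (integrable_pow_gaussianReal _ _ _)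
    ((integrable_pow_gaussianReal _ _ _).const_mul _)
    (by simpa only [hsub] using integrable_pow_gaussianReal (n + 2) 0 v)
  simpa only [hsub, integral_const_mul, Nat.cast_add_one, Nat.add_sub_cancel] using hstein

lemma integral_gaussianReal_eq_zero_of_odd {f : ℝ → ℝ} (hf : f.Odd) (v : ℝ≥0) :
    ∫ x, f x ∂gaussianReal 0 v = 0 := by
  have hneg : ∫ x, f x ∂(gaussianReal 0 v).map (fun x ↦ -x) = ∫ x, f (-x) ∂gaussianReal 0 v :=
    (MeasurableEquiv.neg ℝ).measurableEmbedding.integral_map f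
  simp_rw [gaussianReal_map_neg, neg_zero, hf _, integral_neg] at hneg
  linarith

lemma gaussEvenMoment_pos (j : ℕ) : 0 < gaussEvenMoment j := by
  unfold gaussEvenMoment
  positivity

lemma integral_even_pow_gaussianReal (j : ℕ) :
    ∫ x, x ^ (2 * j) ∂gaussianReal 0 1 = gaussEvenMoment j := by
  induction j with
  | zero => simp [gaussEvenMoment]
  | succ j ih =>
    rw [mul_add_one, integral_pow_add_two_gaussianReal, ih]
    simp only [gaussEvenMoment, mul_add_one, Nat.factorial_succ]
    push_cast
    field_simp
    ring

lemma gaussEvenMoment_mul_choose {i k : ℕ} (hk : k ≤ i) :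
    gaussEvenMoment (i - k) * (2 * i).choose (2 * k)
      = gaussEvenMoment i * i.choose k / gaussEvenMoment k := by
  rw [Nat.cast_choose ℝ hk, Nat.cast_choose ℝ (by lia : 2 * k ≤ 2 * i), ← Nat.mul_sub]
  obtain ⟨p, rfl⟩ := Nat.exists_eq_add_of_le hk
  simp only [gaussEvenMoment, Nat.add_sub_cancel_left]
  field_simp
  ring

lemma sum_range_two_mul_add_one_of_odd_eq_zero {M : Type*} [AddCommMonoid M] (i : ℕ) (f : ℕ → M)
    (hf : ∀ k < i, f (2 * k + 1) = 0) :
    ∑ n ∈ Finset.range (2 * i + 1), f n = ∑ k ∈ Finset.range (i + 1), f (2 * k) := by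
  induction i with
  | zero => simp
  | succ i ih =>
    rw [mul_add_one, Finset.sum_range_succ, Finset.sum_range_succ, ih fun k hk ↦ hf k (by lia),
      hf i (by lia), add_zero, Finset.sum_range_succ _ (i + 1), mul_add_one]

/-- The odd terms of the binomial expansion have mean zero. -/
lemma gaussShiftedMoment_eq_sum (i : ℕ) (c s : ℝ) :
    gaussShiftedMoment i c s = gaussEvenMoment i * ∑ k ∈ Finset.range (i + 1),
      i.choose k * c ^ (2 * k) * s ^ (2 * (i - k)) / gaussEvenMoment k := by
  have hbinom (z : ℝ) : (s * z + c) ^ (2 * i) = ∑ n ∈ Finset.range (2 * i + 1),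
      (c ^ n * s ^ (2 * i - n) * (2 * i).choose n) * z ^ (2 * i - n) := by
    rw [add_comm, add_pow]
    exact Finset.sum_congr rfl fun n _ ↦ by ring
  have hodd (k : ℕ) (hk : k < i) : ∫ z, z ^ (2 * i - (2 * k + 1)) ∂gaussianReal 0 1 = 0 :=
    integral_gaussianReal_eq_zero_of_odd (fun z ↦ Odd.neg_pow ⟨i - k - 1, by lia⟩ z) 1
  simp_rw [gaussShiftedMoment, hbinom]
  rw [integral_finsetSum _ fun n _ ↦ (integrable_pow_gaussianReal _ _ _).const_mul _]
  simp_rw [integral_const_mul]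
  rw [sum_range_two_mul_add_one_of_odd_eq_zero _ _ fun k hk ↦ by rw [hodd k hk, mul_zero],
    Finset.mul_sum]
  refine Finset.sum_congr rfl fun k hk ↦ ?_
  rw [← Nat.mul_sub, integral_even_pow_gaussianReal, mul_assoc, mul_comm _ (gaussEvenMoment _),
    gaussEvenMoment_mul_choose (Finset.mem_range_succ_iff.1 hk)]
  ring

lemma gaussShiftedMoment_pos (i : ℕ) (c : ℝ) {s : ℝ} (hs : s ≠ 0) :
    0 < gaussShiftedMoment i c s := by
  rw [gaussShiftedMoment_eq_sum]
  refine mul_pos (gaussEvenMoment_pos i) (Finset.sum_pos' (fun k _ ↦ ?_) ⟨0, by simp, ?_⟩)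
  · have := gaussEvenMoment_pos k
    simp only [pow_mul]
    positivity
  · have := gaussEvenMoment_pos 0
    simp only [Nat.choose_zero_right, pow_mul]
    positivity

lemma gaussShiftedMoment_neg_right (i : ℕ) (c s : ℝ) :
    gaussShiftedMoment i c (-s) = gaussShiftedMoment i c s := by
  simp_rw [gaussShiftedMoment_eq_sum, (even_two_mul _).neg_pow]

lemma gaussShiftedMoment_mul_mul (i : ℕ) (r c s : ℝ) :
    gaussShiftedMoment i (r * c) (r * s) = r ^ (2 * i) * gaussShiftedMoment i c s := by
  simp_rw [gaussShiftedMoment, ← integral_const_mul, ← mul_pow, mul_add, mul_assoc]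

lemma lintegral_ofReal_affine_pow_div (i : ℕ) (c s : ℝ) {S : ℝ} (hS : 0 ≤ S) :
    ∫⁻ z, ENNReal.ofReal ((s * z + c) ^ (2 * i) / S) ∂gaussianReal 0 1
      = ENNReal.ofReal (gaussShiftedMoment i c s / S) := by
  have hint : Integrable (fun z : ℝ ↦ (s * z + c) ^ (2 * i)) (gaussianReal 0 1) := by
    simp_rw [add_pow, mul_pow]
    exact integrable_finsetSum _ fun k _ ↦
      (((integrable_pow_gaussianReal k 0 1).const_mul _).mul_const _).mul_const _
  rw [gaussShiftedMoment, ← integral_div,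
    ofReal_integral_eq_lintegral_ofReal (hint.div_const _) (ae_of_all _ fun z ↦ ?_)]
  simp only [Pi.zero_apply, pow_mul]
  positivity

lemma gaussianReal_map_mul_add (m σ : ℝ) :
    (gaussianReal 0 1).map (fun z ↦ σ * z + m) = gaussianReal m (σ ^ 2).toNNReal := by
  have hcomp : (fun z : ℝ ↦ σ * z + m) = (· + m) ∘ (σ * ·) := rfl
  rw [hcomp, ← Measure.map_map (by fun_prop) (by fun_prop), gaussianReal_map_const_mul,
    gaussianReal_map_add_const, mul_zero, zero_add, mul_one, Real.toNNReal_of_nonneg (sq_nonneg σ)]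

lemma isProbabilityMeasure_nuKalman (i : ℕ) (μ m : ℝ) {σ : ℝ} (hσ : σ ≠ 0) :
    IsProbabilityMeasure (nuKalman i μ m σ) := by
  have hmoment := gaussShiftedMoment_pos i (m + μ) hσ
  constructor
  rw [nuKalman, withDensity_apply _ .univ, Measure.restrict_univ, ← gaussianReal_map_mul_add,
    lintegral_map (by fun_prop) (by fun_prop)]
  simp_rw [add_assoc]
  rw [lintegral_ofReal_affine_pow_div _ _ _ hmoment.le, div_self hmoment.ne', ENNReal.ofReal_one]

lemma gaussianReal_prod_map_rotation {c s : ℝ} (hcs : c ^ 2 + s ^ 2 = 1) (v : ℝ≥0) :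
    ((gaussianReal 0 v).prod (gaussianReal 0 v)).map
        (fun p ↦ (c * p.1 + s * p.2, -s * p.1 + c * p.2))
      = (gaussianReal 0 v).prod (gaussianReal 0 v) := by
  have hnorm : ‖(⟨c, s⟩ : ℂ)‖ = 1 := by rw [Complex.norm_eq_sqrt_sq_add_sq, hcs, Real.sqrt_one]
  have hcos := Complex.norm_mul_cos_arg (⟨c, s⟩ : ℂ)
  have hsin := Complex.norm_mul_sin_arg (⟨c, s⟩ : ℂ)
  rw [hnorm, one_mul] at hcos hsin
  convert IsGaussian.map_rotation_eq_self (μ := gaussianReal 0 v) (by simp)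
    (Complex.arg ⟨c, s⟩) using 2
  ext p <;> simp only [ContinuousLinearMap.rotation_apply, hcos, hsin, smul_eq_mul]

/-- Gaussian linear regression of `x` on `y = a x + β w`: standardize `x`, then rotate the standard
pair so that its first axis points along `y`. -/
lemma gaussianReal_prod_map_regression {a β σ τ : ℝ} (hτ₀ : τ ≠ 0)
    (hτ : τ ^ 2 = β ^ 2 + a ^ 2 * σ ^ 2) (m : ℝ) :
    ((gaussianReal m (σ ^ 2).toNNReal).prod (gaussianReal 0 1)).map
        (fun p ↦ (a * p.1 + β * p.2, p.1))
      = ((gaussianReal (a * m) (τ ^ 2).toNNReal).prod (gaussianReal 0 1)).map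
        (fun p ↦ (p.1, m + a * σ ^ 2 / τ ^ 2 * (p.1 - a * m) - σ * β / τ * p.2)) := by
  have hstd (m' σ' : ℝ) : (gaussianReal m' (σ' ^ 2).toNNReal).prod (gaussianReal 0 1)
      = ((gaussianReal 0 1).prod (gaussianReal 0 1)).map (Prod.map (fun z ↦ σ' * z + m') id) := by
    rw [← Measure.map_prod_map _ _ (by fun_prop) measurable_id, gaussianReal_map_mul_add,
      Measure.map_id]
  have hcs : (a * σ / τ) ^ 2 + (-(β / τ)) ^ 2 = 1 := by
    field_simp
    rw [hτ]
    ring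
  rw [hstd, hstd, Measure.map_map (by fun_prop) (by fun_prop),
    Measure.map_map (by fun_prop) (by fun_prop)]
  conv_lhs =>
    rw [← gaussianReal_prod_map_rotation hcs, Measure.map_map (by fun_prop) (by fun_prop)]
  congr 1
  funext p
  refine Prod.ext ?_ ?_ <;> simp only [Function.comp_apply, Prod.map_fst, Prod.map_snd, id_eq]
  · have hp : τ * p.1 = (β ^ 2 + a ^ 2 * σ ^ 2) / τ * p.1 := by
      rw [← hτ]
      field_simp
    rw [hp]
    field_simp
    ring
  · field_simp
    ring

lemma withDensity_gaussianReal_prod_map {a β σ τ : ℝ} (hτ₀ : τ ≠ 0)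
    (hτ : τ ^ 2 = β ^ 2 + a ^ 2 * σ ^ 2) (m : ℝ) {g : ℝ → ℝ≥0∞} (hg : Measurable g) :
    (((gaussianReal m (σ ^ 2).toNNReal).withDensity g).prod (gaussianReal 0 1)).map
        (fun p ↦ a * p.1 + β * p.2)
      = (gaussianReal (a * m) (τ ^ 2).toNNReal).withDensity fun y ↦
        ∫⁻ w, g (m + a * σ ^ 2 / τ ^ 2 * (y - a * m) - σ * β / τ * w) ∂gaussianReal 0 1 := by
  refine Measure.ext_of_lintegral _ fun f hf ↦ ?_
  calc
    _ = ∫⁻ p, g p.1 * f (a * p.1 + β * p.2)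
          ∂(gaussianReal m (σ ^ 2).toNNReal).prod (gaussianReal 0 1) := by
      rw [lintegral_map hf (by fun_prop), prod_withDensity_left hg,
        lintegral_withDensity_eq_lintegral_mul _ (by fun_prop) (by fun_prop)]
      rfl
    _ = ∫⁻ q, g q.2 * f q.1 ∂((gaussianReal m (σ ^ 2).toNNReal).prod (gaussianReal 0 1)).map
          (fun p ↦ (a * p.1 + β * p.2, p.1)) := by
      rw [lintegral_map (by fun_prop) (by fun_prop)]
    _ = ∫⁻ y, ∫⁻ w, g (m + a * σ ^ 2 / τ ^ 2 * (y - a * m) - σ * β / τ * w) * f y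
          ∂gaussianReal 0 1 ∂gaussianReal (a * m) (τ ^ 2).toNNReal := by
      rw [gaussianReal_prod_map_regression hτ₀ hτ, lintegral_map (by fun_prop) (by fun_prop),
        lintegral_prod _ (by fun_prop)]
    _ = _ := by
      rw [lintegral_withDensity_eq_lintegral_mul _ (by fun_prop) hf]
      exact lintegral_congr fun y ↦ lintegral_mul_const _ (by fun_prop)

lemma gaussShiftedMoment_eq_mul_kalmanB (i : ℕ) (μ m : ℝ) {σ : ℝ} (hσ : σ ≠ 0) :
    gaussShiftedMoment i (μ + m) σ = gaussEvenMoment i * σ ^ (2 * i) * kalmanB i μ m σ := by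
  rw [gaussShiftedMoment_eq_sum, kalmanB, mul_assoc, Finset.mul_sum (a := σ ^ (2 * i))]
  congr 1
  refine Finset.sum_congr rfl fun k hk ↦ ?_
  have := (gaussEvenMoment_pos k).ne'
  rw [Nat.mul_sub, pow_sub₀ _ hσ (by grind)]
  field_simp

lemma kalmanPredCoeff_nonneg (i k : ℕ) (a β μ m σ : ℝ) : 0 ≤ kalmanPredCoeff i k a β μ m σ := by
  have hmoment (j : ℕ) : 0 < gaussEvenMoment j := gaussEvenMoment_pos j
  simp only [kalmanPredCoeff, kalmanB, pow_mul]
  have hB : 0 ≤ ∑ l ∈ Finset.range (i + 1),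
      (i.choose l : ℝ) * ((μ + m) ^ 2) ^ l / (gaussEvenMoment l * (σ ^ 2) ^ l) :=
    Finset.sum_nonneg fun l _ ↦ by have := hmoment l; positivity
  refine mul_nonneg (by positivity) (Finset.sum_nonneg fun j _ ↦ ?_)
  have := hmoment j
  positivity

section Coefficients

variable {a β σ τ : ℝ}

/-- The share of `E (c + (aσ²/τ) U - (σβ/τ) W)^{2i}`, with `c = μ + m` and `U`, `W` independent
standard Gaussians, that comes from the term of degree `2k` in `c + (aσ²/τ) U`. -/
lemma kalmanPredCoeff_eq_gaussShiftedMoment {i k : ℕ} (hk : k ≤ i) (hσ : σ ≠ 0) (hτ₀ : τ ≠ 0)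
    (hτ : τ ^ 2 = β ^ 2 + a ^ 2 * σ ^ 2) (μ m : ℝ) :
    kalmanPredCoeff i k a β μ m σ
      = gaussEvenMoment i * i.choose k * (σ * β / τ) ^ (2 * (i - k)) / gaussEvenMoment k
        * gaussShiftedMoment k (μ + m) (a * σ ^ 2 / τ) / gaussShiftedMoment i (μ + m) σ := by
  have hi := (gaussEvenMoment_pos i).ne'
  have hk' := (gaussEvenMoment_pos k).ne'
  have hscale (j : ℕ) (hj : j ≤ k) :
      β ^ (2 * (i - k)) * (a ^ (2 * (k - j)) * σ ^ (2 * (k - j)) / (τ ^ 2) ^ (i - j)) / σ ^ (2 * j)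
        = (σ * β / τ) ^ (2 * (i - k)) * (a * σ ^ 2 / τ) ^ (2 * (k - j)) / σ ^ (2 * i) := by
    obtain ⟨q, rfl⟩ := Nat.exists_eq_add_of_le hj
    obtain ⟨p, rfl⟩ := Nat.exists_eq_add_of_le hk
    rw [Nat.add_sub_cancel_left, Nat.add_sub_cancel_left, add_assoc j, Nat.add_sub_cancel_left]
    simp only [div_pow, mul_pow, pow_add, mul_add, ← pow_mul]
    field_simp
    ring
  rw [kalmanPredCoeff, ← hτ, gaussShiftedMoment_eq_sum k,
    gaussShiftedMoment_eq_mul_kalmanB _ _ _ hσ]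
  simp_rw [Finset.mul_sum, Finset.sum_div]
  refine Finset.sum_congr rfl fun j hj ↦ ?_
  calc
    _ = i.choose k * k.choose j * (μ + m) ^ (2 * j) / (gaussEvenMoment j * kalmanB i μ m σ)
        * (β ^ (2 * (i - k)) * (a ^ (2 * (k - j)) * σ ^ (2 * (k - j)) / (τ ^ 2) ^ (i - j))
          / σ ^ (2 * j)) := by
      field_simp
    _ = _ := by
      rw [hscale j (Finset.mem_range_succ_iff.1 hj)]
      field_simp

lemma gaussShiftedMoment_div_eq_sum_kalmanPredCoeff (ha : a ≠ 0) (hσ : σ ≠ 0) (hτ₀ : τ ≠ 0)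
    (hτ : τ ^ 2 = β ^ 2 + a ^ 2 * σ ^ 2) (i : ℕ) (μ m y : ℝ) :
    gaussShiftedMoment i (a * σ ^ 2 / τ ^ 2 * y) (σ * β / τ) / gaussShiftedMoment i (μ + m) σ
      = ∑ k ∈ Finset.range (i + 1), kalmanPredCoeff i k a β μ m σ *
        (y ^ (2 * k) / gaussShiftedMoment k ((μ + m) * τ ^ 2 / (a * σ ^ 2)) τ) := by
  rw [gaussShiftedMoment_eq_sum i (_ * y), Finset.mul_sum, Finset.sum_div]
  refine Finset.sum_congr rfl fun k hk ↦ ?_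
  have hgain : gaussShiftedMoment k (μ + m) (a * σ ^ 2 / τ) = (a * σ ^ 2 / τ ^ 2) ^ (2 * k) *
      gaussShiftedMoment k ((μ + m) * τ ^ 2 / (a * σ ^ 2)) τ := by
    rw [← gaussShiftedMoment_mul_mul]
    congr 1 <;> field_simp
  have := (gaussShiftedMoment_pos k ((μ + m) * τ ^ 2 / (a * σ ^ 2)) hτ₀).ne'
  rw [kalmanPredCoeff_eq_gaussShiftedMoment (Finset.mem_range_succ_iff.1 hk) hσ hτ₀ hτ, hgain,
    mul_pow (_ / _)]
  generalize gaussShiftedMoment k _ τ = C at *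
  field_simp

lemma lintegral_regression_pow_eq_sum_kalmanPredCoeff (ha : a ≠ 0) (hσ : σ ≠ 0) (hτ₀ : τ ≠ 0)
    (hτ : τ ^ 2 = β ^ 2 + a ^ 2 * σ ^ 2) (i : ℕ) (μ m y : ℝ) :
    ∫⁻ w, ENNReal.ofReal ((-(σ * β / τ) * w + a * σ ^ 2 / τ ^ 2 * y) ^ (2 * i)
        / gaussShiftedMoment i (μ + m) σ) ∂gaussianReal 0 1
      = ∑ k ∈ Finset.range (i + 1), ENNReal.ofReal (kalmanPredCoeff i k a β μ m σ) *
        ENNReal.ofReal (y ^ (2 * k) / gaussShiftedMoment k ((μ + m) * τ ^ 2 / (a * σ ^ 2)) τ) := by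
  have hcoeff (k : ℕ) := kalmanPredCoeff_nonneg i k a β μ m σ
  rw [lintegral_ofReal_affine_pow_div _ _ _ (gaussShiftedMoment_pos i _ hσ).le,
    gaussShiftedMoment_neg_right, gaussShiftedMoment_div_eq_sum_kalmanPredCoeff ha hσ hτ₀ hτ,
    ENNReal.ofReal_sum_of_nonneg fun k _ ↦ mul_nonneg (hcoeff k)
      (div_nonneg ((even_two_mul k).pow_nonneg y) (gaussShiftedMoment_pos k _ hτ₀).le)]
  simp_rw [ENNReal.ofReal_mul (hcoeff _)]

end Coefficients

lemma sum_smul_withDensity {α ι : Type*} [MeasurableSpace α] (ν : Measure α) (s : Finset ι)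
    (c : ι → ℝ≥0∞) {f : ι → α → ℝ≥0∞} (hf : ∀ k, Measurable (f k)) :
    ∑ k ∈ s, c k • ν.withDensity (f k) = ν.withDensity fun x ↦ ∑ k ∈ s, c k * f k x := by
  refine Measure.ext_of_lintegral _ fun g hg ↦ ?_
  rw [lintegral_finsetSum_measure, lintegral_withDensity_eq_lintegral_mul _ (by fun_prop) hg]
  simp only [Pi.mul_apply, Finset.sum_mul, mul_assoc]
  rw [lintegral_finsetSum _ (by fun_prop)]
  refine Finset.sum_congr rfl fun k _ ↦ ?_
  rw [lintegral_smul_measure, lintegral_withDensity_eq_lintegral_mul _ (hf k) hg,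
    lintegral_const_mul _ (by fun_prop)]
  rfl

theorem nuKalman_prod_map_mul_add_mul {a β σ τ : ℝ} (ha : a ≠ 0) (hσ : σ ≠ 0)
    (hτ : τ ^ 2 = β ^ 2 + a ^ 2 * σ ^ 2) (i : ℕ) (μ m : ℝ) :
    ((nuKalman i μ m σ).prod (gaussianReal 0 1)).map (fun p ↦ a * p.1 + β * p.2)
      = ∑ k ∈ Finset.range (i + 1), ENNReal.ofReal (kalmanPredCoeff i k a β μ m σ) •
          nuKalman k ((m * β ^ 2 + μ * τ ^ 2) / (a * σ ^ 2)) (a * m) τ := by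
  have hτ₀ : τ ≠ 0 := by
    have : 0 < τ ^ 2 := by rw [hτ]; positivity
    exact (pow_ne_zero_iff two_ne_zero).1 this.ne'
  have hshift : a * m + (m * β ^ 2 + μ * τ ^ 2) / (a * σ ^ 2)
      = (μ + m) * τ ^ 2 / (a * σ ^ 2) := by
    field_simp
    rw [hτ]
    ring
  simp_rw [nuKalman, hshift, add_comm m μ]
  rw [withDensity_gaussianReal_prod_map hτ₀ hτ _ (by fun_prop),
    sum_smul_withDensity _ _ _ (by fun_prop)]
  congr 1
  funext y
  set μ' := (m * β ^ 2 + μ * τ ^ 2) / (a * σ ^ 2)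
  have hregress (w : ℝ) : m + a * σ ^ 2 / τ ^ 2 * (y - a * m) - σ * β / τ * w + μ
      = -(σ * β / τ) * w + a * σ ^ 2 / τ ^ 2 * (y + μ') := by
    have : y - a * m = y + μ' - (μ + m) * τ ^ 2 / (a * σ ^ 2) := by rw [← hshift]; ring
    rw [this]
    field_simp
    ring
  simp_rw [hregress]
  exact lintegral_regression_pow_eq_sum_kalmanPredCoeff ha hσ hτ₀ hτ i μ m (y + μ')

lemma sum_eq_one_of_eq_sum_smul {α ι : Type*} [MeasurableSpace α] {ρ : Measure α}
    [IsProbabilityMeasure ρ] {s : Finset ι} {c : ι → ℝ} {ν : ι → Measure α}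
    (hρ : ρ = ∑ k ∈ s, ENNReal.ofReal (c k) • ν k) (hc : ∀ k ∈ s, 0 ≤ c k)
    (hν : ∀ k ∈ s, IsProbabilityMeasure (ν k)) : ∑ k ∈ s, c k = 1 := by
  have huniv : ρ Set.univ = ∑ k ∈ s, ENNReal.ofReal (c k) := by
    rw [hρ, Measure.finsetSum_apply]
    refine Finset.sum_congr rfl fun k hk ↦ ?_
    rw [Measure.smul_apply, (hν k hk).measure_univ, smul_eq_mul, mul_one]
  rwa [measure_univ, ← ENNReal.ofReal_sum_of_nonneg hc, eq_comm, ENNReal.ofReal_eq_one] at huniv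

/-- Prediction step of the Kalman filter `x' = a x + β η`: if `X ∼ ν^i_{(μ,m,σ²)}`
and `η` is an independent standard Gaussian, then the law of `aX + βη` is the
finite mixture `∑_{k=0}^i ᾱ_k^{(i)} ν^k_{(μ̄,m̄,σ̄²)}` with `m̄ = am`,
`σ̄² = β² + a²σ²`, `μ̄ = (mβ² + μσ̄²)/(aσ²)`; the `ᾱ_k^{(i)}` are nonnegative
and sum to `1`. -/
theorem nuKalman_prediction
    {Ω : Type*} [MeasurableSpace Ω] (P : Measure Ω) [IsProbabilityMeasure P]
    (a β μ m σ : ℝ) (ha : a ≠ 0) (hβ : 0 < β) (hσ : 0 < σ) (i : ℕ)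
    (X η : Ω → ℝ) (hX : Measurable X) (hη : Measurable η)
    (hlawX : Measure.map X P = nuKalman i μ m σ)
    (hlawη : Measure.map η P = gaussianReal 0 1)
    (hindep : IndepFun X η P) :
    Measure.map (fun ω => a * X ω + β * η ω) P
      = ∑ k ∈ Finset.range (i + 1),
          ENNReal.ofReal (kalmanPredCoeff i k a β μ m σ) •
            nuKalman k ((m * β ^ 2 + μ * (β ^ 2 + a ^ 2 * σ ^ 2)) / (a * σ ^ 2))
              (a * m) (Real.sqrt (β ^ 2 + a ^ 2 * σ ^ 2)) ∧
    (∀ k, 0 ≤ kalmanPredCoeff i k a β μ m σ) ∧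
    ∑ k ∈ Finset.range (i + 1), kalmanPredCoeff i k a β μ m σ = 1 := by
  have hτ₀ : √(β ^ 2 + a ^ 2 * σ ^ 2) ≠ 0 := by positivity
  have hτ : √(β ^ 2 + a ^ 2 * σ ^ 2) ^ 2 = β ^ 2 + a ^ 2 * σ ^ 2 := Real.sq_sqrt (by positivity)
  have hjoint := (indepFun_iff_map_prod_eq_prod_map_map hX.aemeasurable hη.aemeasurable).1 hindep
  have hmap : Measure.map (fun ω ↦ a * X ω + β * η ω) P
      = ((nuKalman i μ m σ).prod (gaussianReal 0 1)).map (fun p ↦ a * p.1 + β * p.2) := by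
    rw [← hlawX, ← hlawη, ← hjoint, Measure.map_map (by fun_prop) (by fun_prop)]
    rfl
  have hlaw := hmap.trans (nuKalman_prod_map_mul_add_mul ha hσ.ne' hτ i μ m)
  rw [hτ] at hlaw
  have hnonneg (k : ℕ) := kalmanPredCoeff_nonneg i k a β μ m σ
  have := Measure.isProbabilityMeasure_map (μ := P) (f := fun ω ↦ a * X ω + β * η ω) (by fun_prop)
  exact ⟨hlaw, hnonneg, sum_eq_one_of_eq_sum_smul hlaw (fun k _ ↦ hnonneg k)
    fun k _ ↦ isProbabilityMeasure_nuKalman k _ _ hτ₀⟩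
end
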